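/- arXiv:1709.06115 — 3 statements merged into one kernel-verified Lean document; each statement's English description precedes it below -/
import Mathlib

section
/- For every real number H with 1/2 < H < 1, the series ∑_{k=1}^{∞} γ_H(k) diverges; more precisely, the partial sums ∑_{k=1}^{K} γ_H(k) tend to +∞ as K → ∞. In particular the autocorrelations of fGn are not absolutely summable (long memory). -/
/-!
The partial sums telescope: `2 ∑_{k=1}^{K} γ_H(k) = (K+1)^{2H} - K^{2H} - 1`. Since
`(K+1)^{2H} = (K+1) (K+1)^{2H-1} ≥ (K+1) K^{2H-1} = K^{2H} + K^{2H-1}`, they are bounded below by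
`(K^{2H-1} - 1) / 2`, which tends to `+∞` because `2H - 1 > 0`.
-/

/-- The fGn autocorrelation function at positive integer lags `k ≥ 1`:
`γ_H(k) = ((k−1)^{2H} − 2 k^{2H} + (k+1)^{2H})/2`, real powers of nonnegative reals. -/
noncomputable def fgnAcf (H : ℝ) (k : ℕ) : ℝ :=
  (((k : ℝ) - 1) ^ (2 * H) - 2 * (k : ℝ) ^ (2 * H) + ((k : ℝ) + 1) ^ (2 * H)) / 2

theorem sum_fgnAcf (H : ℝ) (hH : 0 < H) (K : ℕ) :
    ∑ k ∈ Finset.Icc 1 K, fgnAcf H k =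
      (((K : ℝ) + 1) ^ (2 * H) - (K : ℝ) ^ (2 * H) - 1) / 2 := by
  induction K with
  | zero =>
    have h : 2 * H ≠ 0 := by positivity
    simp [Real.zero_rpow h]
  | succ n ih =>
    rw [Finset.sum_Icc_succ_top (by omega), ih, fgnAcf]
    push_cast
    rw [add_sub_cancel_right]
    ring

theorem rpow_sub_one_le_rpow_increment {p x : ℝ} (hp : 1 < p) (hx : 0 < x) :
    x ^ (p - 1) ≤ (x + 1) ^ p - x ^ p := by
  have split : ∀ y : ℝ, 0 < y → y ^ p = y * y ^ (p - 1) := fun y hy => by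
    rw [Real.rpow_sub_one hy.ne', mul_div_cancel₀ _ hy.ne']
  have mono : x ^ (p - 1) ≤ (x + 1) ^ (p - 1) :=
    Real.rpow_le_rpow hx.le (by linarith) (by linarith)
  rw [split x hx, split (x + 1) (by linarith)]
  nlinarith

/-- For `1/2 < H < 1`, the partial sums of the fGn autocorrelations tend to `+∞`:
the autocorrelations are not (absolutely) summable (long memory). -/
theorem fgn_long_memory (H : ℝ) (hH1 : 1 / 2 < H) (hH2 : H < 1) :
    Filter.Tendsto (fun K : ℕ => ∑ k ∈ Finset.Icc 1 K, fgnAcf H k)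
      Filter.atTop Filter.atTop := by
  have lower : Filter.Tendsto (fun K : ℕ => ((K : ℝ) ^ (2 * H - 1) - 1) / 2)
      Filter.atTop Filter.atTop := by
    have h := (tendsto_rpow_atTop (show 0 < 2 * H - 1 by linarith)).comp
      (tendsto_natCast_atTop_atTop (R := ℝ))
    exact (Filter.tendsto_atTop_add_const_right _ (-1) h).atTop_div_const two_pos
  refine Filter.tendsto_atTop_mono' _ ?_ lower
  filter_upwards [Filter.eventually_gt_atTop 0] with K hK
  rw [sum_fgnAcf H (by linarith)]
  have := rpow_sub_one_le_rpow_increment (p := 2 * H) (by linarith) (Nat.cast_pos (α := ℝ).2 hK)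
  linarith
end

section
/- For every real number H with 1/2 < H < 1, the fGn autocorrelation function is strictly decreasing at positive lags: γ_H(k+1) < γ_H(k) for every integer k ≥ 1. -/
open Set in
/-- The second forward difference of a power with exponent in `(1, 2)` is strictly decreasing. -/
lemma strictAntiOn_secondDiff_rpow {p : ℝ} (hp1 : 1 < p) (hp2 : p < 2) :
    StrictAntiOn (fun x : ℝ => x ^ p - 2 * (x + 1) ^ p + (x + 2) ^ p) (Ici 0) := by
  have hderiv (x : ℝ) : HasDerivAt (fun x : ℝ => x ^ p - 2 * (x + 1) ^ p + (x + 2) ^ p)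
      (p * x ^ (p - 1) - 2 * (p * (x + 1) ^ (p - 1)) + p * (x + 2) ^ (p - 1)) x := by
    have h (c : ℝ) : HasDerivAt (fun x : ℝ => (x + c) ^ p) (p * (x + c) ^ (p - 1)) x :=
      (Real.hasDerivAt_rpow_const (Or.inr hp1.le)).comp_add_const x c
    exact ((Real.hasDerivAt_rpow_const (Or.inr hp1.le)).sub ((h 1).const_mul 2)).add (h 2)
  refine strictAntiOn_of_deriv_neg (convex_Ici 0)
    (fun x _ => (hderiv x).continuousAt.continuousWithinAt) fun x hx => ?_
  rw [interior_Ici, mem_Ioi] at hx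
  rw [(hderiv x).deriv]
  -- strict concavity of `t ↦ t ^ (p - 1)` at `x + 1`, the midpoint of `x` and `x + 2`
  have hconc := (Real.strictConcaveOn_rpow (p := p - 1) (by linarith) (by linarith)).2
    (mem_Ici.2 hx.le) (mem_Ici.2 (by linarith : (0 : ℝ) ≤ x + 2)) (by linarith : x ≠ x + 2)
    (by norm_num : (0 : ℝ) < 1 / 2) (by norm_num : (0 : ℝ) < 1 / 2) (by norm_num)
  simp only [smul_eq_mul] at hconc
  rw [show 1 / 2 * x + 1 / 2 * (x + 2) = x + 1 by ring] at hconc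
  nlinarith

/-- For `1/2 < H < 1`, the fGn autocorrelation function is strictly decreasing at
positive lags: `γ_H(k+1) < γ_H(k)` for every `k ≥ 1`. -/
theorem fgn_acf_strict_decr (H : ℝ) (hH1 : 1 / 2 < H) (hH2 : H < 1) (k : ℕ) (hk : 1 ≤ k) :
    fgnAcf H (k + 1) < fgnAcf H k := by
  have hk' : (1 : ℝ) ≤ k := by exact_mod_cast hk
  have h := strictAntiOn_secondDiff_rpow (p := 2 * H) (by linarith) (by linarith)
    (Set.mem_Ici.2 (by linarith : (0 : ℝ) ≤ k - 1)) (Set.mem_Ici.2 (by linarith : (0 : ℝ) ≤ k))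
    (by linarith)
  simp only [sub_add_cancel] at h
  rw [show (k : ℝ) - 1 + 2 = k + 1 by ring] at h
  unfold fgnAcf
  push_cast
  rw [add_sub_cancel_right, show (k : ℝ) + 1 + 1 = k + 2 by ring]
  linarith
end

section
/- For every real number H with 0 < H < 1 and H ≠ 1/2, the fGn autocorrelation function has the hyperbolic decay γ_H(k) ~ H(2H−1)·k^{2(H−1)} as k → ∞; that is, the ratio γ_H(k) / (H(2H−1)·k^{2H−2}) tends to 1 as the integer k tends to infinity. -/
open Filter Topology

lemma hasDerivAt_one_add_rpow (b x : ℝ) (hx : -1 < x) :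
    HasDerivAt (fun y : ℝ => (1 + y) ^ b) (b * (1 + x) ^ (b - 1)) x := by
  have h := ((hasDerivAt_id x).const_add 1).rpow_const (p := b)
    (Or.inl (by simp only [id]; linarith))
  simpa using h

lemma hasDerivAt_one_sub_rpow (b x : ℝ) (hx : x < 1) :
    HasDerivAt (fun y : ℝ => (1 - y) ^ b) (-(b * (1 - x) ^ (b - 1))) x := by
  have h := ((hasDerivAt_id x).const_sub 1).rpow_const (p := b)
    (Or.inl (by simp only [id]; linarith))
  simpa using h

/-- The second symmetric difference quotient of `t ↦ t ^ a` at `1` tends to the second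
derivative. -/
lemma tendsto_second_difference_rpow (a : ℝ) :
    Tendsto (fun x : ℝ => ((1 - x) ^ a - 2 + (1 + x) ^ a) / x ^ 2) (𝓝[>] 0)
      (𝓝 (a * (a - 1))) := by
  have hnear : ∀ᶠ x : ℝ in 𝓝[>] 0, x ∈ Set.Ioo (0 : ℝ) 1 :=
    Ioo_mem_nhdsGT one_pos
  refine HasDerivAt.lhopital_zero_nhdsGT
    (f' := fun x => -(a * (1 - x) ^ (a - 1)) + a * (1 + x) ^ (a - 1))
    (g' := fun x => 2 * x) ?_ ?_ ?_ ?_ ?_ ?_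
  · filter_upwards [hnear] with x hx
    exact ((hasDerivAt_one_sub_rpow a x hx.2).sub_const 2).add
      (hasDerivAt_one_add_rpow a x (by linarith [hx.1]))
  · filter_upwards with x
    simpa using hasDerivAt_pow 2 x
  · filter_upwards [hnear] with x hx
    have := hx.1
    positivity
  · have h : ContinuousAt (fun x : ℝ => (1 - x) ^ a - 2 + (1 + x) ^ a) 0 :=
      (((hasDerivAt_one_sub_rpow a 0 one_pos).sub_const 2).add
        (hasDerivAt_one_add_rpow a 0 (by norm_num))).continuousAt
    have h' := h.tendsto
    norm_num at h'
    exact h'.mono_left nhdsWithin_le_nhds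
  · have h : ContinuousAt (fun x : ℝ => x ^ 2) 0 := by fun_prop
    have h' := h.tendsto
    norm_num at h'
    exact h'.mono_left nhdsWithin_le_nhds
  · have h := ((hasDerivAt_one_add_rpow (a - 1) 0 (by norm_num)).sub
      (hasDerivAt_one_sub_rpow (a - 1) 0 one_pos)).tendsto_slope
    have h2 := (h.mono_left (nhdsWithin_mono 0
      (fun x (hx : 0 < x) => hx.ne' : Set.Ioi (0 : ℝ) ⊆ {0}ᶜ))).const_mul (a / 2)
    have hlim : a / 2 * ((a - 1) * (1 + 0) ^ (a - 1 - 1) - -((a - 1) * (1 - 0) ^ (a - 1 - 1)))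
        = a * (a - 1) := by
      simp only [add_zero, sub_zero, Real.one_rpow]
      ring
    rw [hlim] at h2
    refine h2.congr' ?_
    filter_upwards [hnear] with x hx
    have := hx.1.ne'
    simp only [slope_def_field, Pi.sub_apply, add_zero, sub_zero, Real.one_rpow]
    field_simp
    ring

/-- Hyperbolic decay of the fGn autocorrelation function: for `0 < H < 1`, `H ≠ 1/2`,
`γ_H(k) ∼ H(2H−1) k^{2(H−1)}` as `k → ∞`. -/
theorem fgn_acf_hyperbolic_decay (H : ℝ) (hH1 : 0 < H) (hH2 : H < 1) (hH3 : H ≠ 1 / 2) :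
    Filter.Tendsto
      (fun k : ℕ => fgnAcf H k / (H * (2 * H - 1) * (k : ℝ) ^ (2 * (H - 1))))
      Filter.atTop (nhds 1) := by
  have hc : 2 * H - 1 ≠ 0 := fun h => hH3 (by linarith)
  have hinv : Tendsto (fun k : ℕ => ((k : ℝ))⁻¹) atTop (𝓝[>] 0) :=
    tendsto_inv_atTop_nhdsGT_zero.comp tendsto_natCast_atTop_atTop
  have h := ((tendsto_second_difference_rpow (2 * H)).comp hinv).div_const
    (2 * (H * (2 * H - 1)))
  have hlim : 2 * H * (2 * H - 1) / (2 * (H * (2 * H - 1))) = 1 := by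
    field_simp
  rw [hlim] at h
  refine h.congr' ?_
  filter_upwards [eventually_ge_atTop 1] with k hk
  have hk1 : (1 : ℝ) ≤ k := by exact_mod_cast hk
  have hk0 : (0 : ℝ) < k := by linarith
  have hinv1 : (k : ℝ)⁻¹ ≤ 1 := inv_le_one_of_one_le₀ hk1
  have hsub : ((k : ℝ) - 1) ^ (2 * H) = (k : ℝ) ^ (2 * H) * (1 - (k : ℝ)⁻¹) ^ (2 * H) := by
    rw [← Real.mul_rpow hk0.le (by linarith)]
    congr 1
    field_simp
  have hadd : ((k : ℝ) + 1) ^ (2 * H) = (k : ℝ) ^ (2 * H) * (1 + (k : ℝ)⁻¹) ^ (2 * H) := by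
    rw [← Real.mul_rpow hk0.le (by positivity)]
    congr 1
    field_simp
  have hpow : (k : ℝ) ^ (2 * (H - 1)) = (k : ℝ) ^ (2 * H) / (k : ℝ) ^ 2 := by
    rw [← Real.rpow_natCast, ← Real.rpow_sub hk0]
    congr 1
    push_cast
    ring
  have hP : (k : ℝ) ^ (2 * H) ≠ 0 := (Real.rpow_pos_of_pos hk0 _).ne'
  simp only [Function.comp_apply, fgnAcf]
  rw [hsub, hadd, hpow]
  generalize (1 - (k : ℝ)⁻¹) ^ (2 * H) = A
  generalize (1 + (k : ℝ)⁻¹) ^ (2 * H) = B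
  generalize (k : ℝ) ^ (2 * H) = P at hP ⊢
  field_simp
end
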